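/- arXiv:2010.01059 — 2 statements merged into one kernel-verified Lean document; each statement's English description precedes it below -/
import Mathlib

section
/- Let F be a field, R and V natural numbers with R + V >= 1, f_1, ..., f_R pairwise distinct elements of F, and coefficients w_1, ..., w_R in F and c_1, ..., c_V in F, not all zero. Define g on F \ {f_1,...,f_R} by g(alpha) = sum_{j=1}^R w_j/(alpha - f_j) + sum_{m=1}^V c_m alpha^{m-1}. Then g has at most R + V - 1 zeros, i.e., the set { alpha in F : alpha is not one of f_1,...,f_R and g(alpha) = 0 } has cardinality at most R + V - 1. -/
/-!
Multiplying `g` by `∏ j, (X - f j)` clears the poles and leaves a polynomial of degree less than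
`R + V` which vanishes at every zero of `g`. Its value at `f j` is `w j * ∏ i ≠ j, (f j - f i)`, so
if it is the zero polynomial, all `w j` vanish because the poles are distinct; what remains is the
polynomial part of `g` times the nonzero product, so all `c m` vanish too.
-/

open Finset Polynomial Lagrange

theorem eval_ofFn {S : Type*} [Semiring S] [DecidableEq S] {n : ℕ} (c : Fin n → S) (x : S) :
    (ofFn n c).eval x = ∑ m, c m * x ^ (m : ℕ) := by
  simp only [ofFn_eq_sum_monomial, eval_finsetSum, eval_monomial]

section Numerator

variable {R ι : Type*} [CommRing R] [DecidableEq ι] {s : Finset ι} {v w : ι → R} {q : R[X]}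

/-- The numerator of the rational function `∑ i ∈ s, w i / (X - v i) + q` over the common
denominator `Lagrange.nodal s v = ∏ i ∈ s, (X - v i)`. It is not required to be in lowest terms, so
it makes sense over any commutative ring and for repeated poles. -/
noncomputable def partialFractionNumerator (s : Finset ι) (v w : ι → R) (q : R[X]) : R[X] :=
  ∑ i ∈ s, w i • nodal (s.erase i) v + q * nodal s v

theorem degree_partialFractionNumerator_lt {n : ℕ} (hq : q.degree < n) :
    (partialFractionNumerator s v w q).degree < (#s + n : ℕ) := by
  nontriviality R
  have degree_term (i : ι) (hi : i ∈ s) :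
      (w i • nodal (s.erase i) v).degree < (#s + n : ℕ) := by
    refine (degree_smul_le (w i) _).trans_lt ?_
    rw [degree_nodal, Nat.cast_lt]
    exact (card_erase_lt_of_mem hi).trans_le (Nat.le_add_right _ _)
  have degree_mul_nodal : (q * nodal s v).degree < (#s + n : ℕ) := by
    rw [nodal_monic.degree_mul, degree_nodal, add_comm, Nat.cast_add]
    exact WithBot.add_lt_add_left (WithBot.natCast_ne_bot _) hq
  refine (degree_add_le _ _).trans_lt (max_lt ?_ degree_mul_nodal)
  exact (degree_sum_le s _).trans_lt <| (Finset.sup_lt_iff (WithBot.bot_lt_coe _)).2 degree_term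

theorem eval_partialFractionNumerator_at_node {i : ι} (hi : i ∈ s) :
    (partialFractionNumerator s v w q).eval (v i) = w i * (nodal (s.erase i) v).eval (v i) := by
  have eval_term_of_ne (j : ι) (_ : j ∈ s) (hji : j ≠ i) :
      (w j • nodal (s.erase j) v).eval (v i) = 0 := by
    rw [eval_smul, eval_nodal_at_node (mem_erase.2 ⟨hji.symm, hi⟩), smul_zero]
  rw [partialFractionNumerator, eval_add, eval_mul, eval_nodal_at_node hi, mul_zero, add_zero,
    eval_finsetSum, sum_eq_single_of_mem i hi eval_term_of_ne, eval_smul, smul_eq_mul]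

theorem partialFractionNumerator_eq_zero_iff [IsDomain R] (hv : Set.InjOn v s) :
    partialFractionNumerator s v w q = 0 ↔ (∀ i ∈ s, w i = 0) ∧ q = 0 := by
  have eq_mul_nodal (hw : ∀ i ∈ s, w i = 0) :
      partialFractionNumerator s v w q = q * nodal s v := by
    rw [partialFractionNumerator, add_eq_right]
    exact sum_eq_zero fun i hi ↦ by rw [hw i hi, zero_smul]
  constructor
  · intro h
    have hw (i : ι) (hi : i ∈ s) : w i = 0 := by
      have eval_ne_zero : (nodal (s.erase i) v).eval (v i) ≠ 0 :=
        eval_nodal_not_at_node fun j hj hij ↦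
          ne_of_mem_erase hj (hv (mem_of_mem_erase hj) hi hij.symm)
      have eval_eq_zero := eval_partialFractionNumerator_at_node (w := w) (q := q) (v := v) hi
      rw [h, eval_zero] at eval_eq_zero
      exact (mul_eq_zero.1 eval_eq_zero.symm).resolve_right eval_ne_zero
    exact ⟨hw, (mul_eq_zero.1 ((eq_mul_nodal hw).symm.trans h)).resolve_right nodal_ne_zero⟩
  · rintro ⟨hw, rfl⟩
    rw [eq_mul_nodal hw, zero_mul]

end Numerator

section Zeros

variable {F ι : Type*} [Field F] [DecidableEq ι] {s : Finset ι} {v w : ι → F} {q : F[X]}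

theorem eval_partialFractionNumerator_not_at_node {x : F} (hx : ∀ i ∈ s, x ≠ v i) :
    (partialFractionNumerator s v w q).eval x =
      (∑ i ∈ s, w i / (x - v i) + q.eval x) * (nodal s v).eval x := by
  have eval_term (i : ι) (hi : i ∈ s) :
      (w i • nodal (s.erase i) v).eval x = w i / (x - v i) * (nodal s v).eval x := by
    have hxi : x - v i ≠ 0 := sub_ne_zero.2 (hx i hi)
    rw [nodal_eq_mul_nodal_erase hi, eval_smul, smul_eq_mul, eval_mul, eval_sub, eval_X, eval_C,
      ← mul_assoc, div_mul_cancel₀ _ hxi]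
  rw [partialFractionNumerator, eval_add, eval_mul, eval_finsetSum, sum_congr rfl eval_term,
    ← sum_mul, add_mul]

theorem zeros_subset_rootSet_partialFractionNumerator
    (hN : partialFractionNumerator s v w q ≠ 0) :
    {x : F | (∀ i ∈ s, x ≠ v i) ∧ ∑ i ∈ s, w i / (x - v i) + q.eval x = 0} ⊆
      (partialFractionNumerator s v w q).rootSet F := by
  rintro x ⟨hx, hzero⟩
  rw [mem_rootSet_of_ne hN, coe_aeval_eq_eval, eval_partialFractionNumerator_not_at_node hx,
    hzero, zero_mul]

end Zeros

/-- Zero counting for Cauchy–Vandermonde evaluation functions: if `f 1, …, f R` are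
pairwise distinct, `R + V ≥ 1`, and the coefficients `w : Fin R → F`, `c : Fin V → F`
are not all zero, then the function
`g(α) = ∑ j, w j / (α - f j) + ∑ m, c m * α^(m-1)`
has at most `R + V - 1` zeros on `F \ {f 1, …, f R}`. -/
theorem cauchy_vandermonde_zero_count
    {F : Type*} [Field F] (R V : ℕ) (hRV : 1 ≤ R + V)
    (f : Fin R → F) (hf : Function.Injective f)
    (w : Fin R → F) (c : Fin V → F) (hne : w ≠ 0 ∨ c ≠ 0) :
    {α : F | (∀ j : Fin R, α ≠ f j) ∧
        (∑ j : Fin R, w j / (α - f j)) + (∑ m : Fin V, c m * α ^ (m : ℕ)) = 0}.Finite ∧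
    {α : F | (∀ j : Fin R, α ≠ f j) ∧
        (∑ j : Fin R, w j / (α - f j)) + (∑ m : Fin V, c m * α ^ (m : ℕ)) = 0}.ncard
      ≤ R + V - 1 := by
  classical
  let N := partialFractionNumerator univ f w (ofFn V c)
  have hN : N ≠ 0 := by
    intro h
    obtain ⟨hw, hc⟩ := (partialFractionNumerator_eq_zero_iff hf.injOn).1 h
    exact hne.elim (· (funext fun j ↦ hw j (mem_univ j)))
      (· ((map_eq_zero_iff _ (injective_ofFn V)).1 hc))
  have natDegree_lt : N.natDegree < R + V := by
    rw [natDegree_lt_iff_degree_lt hN]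
    simpa only [card_univ, Fintype.card_fin] using
      degree_partialFractionNumerator_lt (s := univ) (v := f) (w := w) (ofFn_degree_lt c)
  have zeros_subset := zeros_subset_rootSet_partialFractionNumerator hN
  simp only [mem_univ, true_imp_iff, eval_ofFn] at zeros_subset
  have finite_rootSet := rootSet_finite N F
  exact ⟨finite_rootSet.subset zeros_subset, (Set.ncard_le_ncard zeros_subset finite_rootSet).trans
    ((ncard_rootSet_le N F).trans (Nat.le_sub_one_of_lt natDegree_lt))⟩
end

section
/- Let F be a finite field, let K >= 1, M >= 1, K_c >= 1 and X >= 1 be natural numbers, let a_1, ..., a_X be pairwise distinct elements of F, and let f_{u,i} (u in [M], i in [K_c]) be elements of F with f_{u,i} != a_n for all u, i, n. Let the random vectors Z_{u,x} (u in [M], x in [X]) be independent and uniformly distributed on F^K. Then for every choice of data vectors W_{u,i} in F^K (u in [M], i in [K_c]), the joint distribution of the tuple ( sum_{i=1}^{K_c} (1/(a_n - f_{u,i})) W_{u,i} + sum_{x=1}^{X} a_n^{x-1} Z_{u,x} )_{u in [M], n in [X]} is the uniform distribution on (F^K)^{M x X}. In particular, this joint distribution does not depend on the data vectors W_{u,i}.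 -/
/-!
For each row `u`, the blocks seen by the colluding servers are a vector that does not depend on the
noise plus the Vandermonde matrix of the evaluation points applied to the noise vectors `Z u`. The
determinant of this matrix is a product of differences of distinct points, hence a unit, so the map
from noise to blocks is bijective and carries the uniform distribution to the uniform distribution.
-/

theorem pmf_map_apply_of_injective {α β : Type*} {g : α → β} (hg : Function.Injective g)
    (p : PMF α) (a : α) : p.map g (g a) = p a := by
  rw [PMF.map_apply, tsum_eq_single a fun a' ha' => if_neg (hg.ne ha'.symm), if_pos rfl]

theorem pmf_map_uniformOfFintype_of_bijective {α β : Type*} [Fintype α] [Nonempty α]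
    [Fintype β] [Nonempty β] {g : α → β} (hg : Function.Bijective g) :
    (PMF.uniformOfFintype α).map g = PMF.uniformOfFintype β := by
  ext b
  obtain ⟨a, rfl⟩ := hg.surjective b
  rw [pmf_map_apply_of_injective hg.injective, PMF.uniformOfFintype_apply,
    PMF.uniformOfFintype_apply, Fintype.card_of_bijective hg]

open scoped Matrix.Module in
theorem bijective_add_sum_smul_of_isUnit {ι R V : Type*} [Fintype ι] [DecidableEq ι] [Ring R]
    [AddCommGroup V] [Module R V] {A : Matrix ι ι R} (hA : IsUnit A) (c : ι → V) :
    Function.Bijective fun (z : ι → V) (i : ι) => c i + ∑ j, A i j • z j :=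
  (AddGroup.addLeft_bijective c).comp hA.smul_bijective

theorem isUnit_vandermonde {R : Type*} [CommRing R] {n : ℕ} {a : Fin n → R}
    (ha : Pairwise fun i j => IsUnit (a i - a j)) : IsUnit (Matrix.vandermonde a) := by
  simp only [Matrix.isUnit_iff_isUnit_det, Matrix.det_vandermonde, IsUnit.prod_iff, Finset.mem_Ioi]
  exact fun i _ j hij => ha (ne_of_gt hij)

theorem acsa_storage_X_security_general {R V U : Type*} [CommRing R] [AddCommGroup V] [Module R V]
    [Fintype V] [Fintype U] [DecidableEq U] {X : ℕ} {a : Fin X → R}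
    (ha : Pairwise fun m n => IsUnit (a m - a n)) (c : U × Fin X → V) :
    PMF.map
      (fun (Z : U → Fin X → V) (p : U × Fin X) => c p + ∑ x : Fin X, a p.2 ^ (x : ℕ) • Z p.1 x)
      (PMF.uniformOfFintype (U → Fin X → V))
    = PMF.uniformOfFintype (U × Fin X → V) := by
  have row_bijective (u : U) :
      Function.Bijective fun (z : Fin X → V) n => c (u, n) + ∑ x : Fin X, a n ^ (x : ℕ) • z x :=
    bijective_add_sum_smul_of_isUnit (isUnit_vandermonde ha) fun n => c (u, n)
  exact pmf_map_uniformOfFintype_of_bijective <|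
    (Equiv.curry U (Fin X) V).symm.bijective.comp (Function.Bijective.piMap row_bijective)

/-- X-security of ACSA storage: with `Z u x` (`u ∈ [M]`, `x ∈ [X]`) independent
uniform random vectors on `F^K` (modeled as a single uniform random variable on the
product), the tuple of storage blocks
`∑ i, (1/(a n - f u i)) • W u i + ∑ x, (a n)^(x-1) • Z u x`
held by `X` colluding servers with pairwise distinct evaluation points `a 1, …, a X`
is uniformly distributed on `(F^K)^(M × X)`; in particular its distribution does not
depend on the data vectors `W u i`. -/
theorem acsa_storage_X_security
    {F : Type*} [Field F] [Fintype F] [DecidableEq F]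
    (K M Kc X : ℕ) (hK : 1 ≤ K) (hM : 1 ≤ M) (hKc : 1 ≤ Kc) (hX : 1 ≤ X)
    (a : Fin X → F) (ha : Function.Injective a)
    (f : Fin M → Fin Kc → F)
    (hfa : ∀ (u : Fin M) (i : Fin Kc) (n : Fin X), f u i ≠ a n)
    (W : Fin M → Fin Kc → Fin K → F) :
    PMF.map
      (fun (Z : Fin M → Fin X → Fin K → F) (p : Fin M × Fin X) =>
        (∑ i : Fin Kc, (1 / (a p.2 - f p.1 i)) • W p.1 i) +
          ∑ x : Fin X, ((a p.2) ^ (x : ℕ)) • Z p.1 x)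
      (PMF.uniformOfFintype (Fin M → Fin X → Fin K → F))
    = PMF.uniformOfFintype (Fin M × Fin X → Fin K → F) := by
  exact acsa_storage_X_security_general
    (fun _ _ hmn => (sub_ne_zero.2 (ha.ne hmn)).isUnit) _
end
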